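/- A finite set S of n-qubit Pauli operators is contextual if and only if it contains four operators A, B, C, D such that A commutes with B, A commutes with C, B anticommutes with C, and D anticommutes with A (that is, if and only if it contains a four-element subset whose compatibility graph is, up to permutation of the operators, one of the three graphs on vertices {A,B,C,D} with edge sets {AB, AC}, {AB, AC, BD}, or {AB, AC, BD, CD}). -/

import Mathlib

/-!
Two Pauli operators always commute or anticommute, every Pauli operator squares to the identity,
and a product of two commuting Pauli operators is again a Pauli operator; these three facts are all
that is used about Pauli operators.

*Four operators give contextuality.* Let `A` commute with `B` and `C`, and let `B`, `C`
anticommute, as well as `D`, `A`. Depending on how `D` relates to `B` and `C`, a pair of opposite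
operators is determined by the same set:
* `D` anticommutes with both: `(D(AB))C = -(D(AC))B`;
* `D` commutes with `B` only: `(DB)C = -((AC)D)(AB)`, where `A` occurs twice on the right;
* `D` commutes with both: `(AB)(DC) = -(AC)(DB)`, the Mermin–Peres square.

*No four operators gives noncontextuality.* Let `N` be the set of elements of `S` that fail to
commute with some element of `S`. If the configuration does not occur, any two elements of `S`
commuting with the same element of `N` commute with each other. So commutation is an
equivalence relation on `N`. Choose a representative `rep s` of the class of each `s ∈ N`, and put
`rep s = 1` for the other elements of `S`. Then `rep s * s` commutes with all of `S` and has square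
`1`. By induction, the label of a determining tree is `c * ∏ rep s * s`, the product running over
the leaves `s` and `c` being `1` or a representative (`normalForm_of_valid`): distinct
representatives do not commute, so among pairwise commuting children at most one representative
other than `1` occurs, and it squares to `1`. The product depends only on the determining
set, so trees for `A` and `-A` with the same determining set would give `c = -c'` with `c`, `c'`
equal to `1` or representatives. As `c` and `c'` commute, they are equal or one of them is `1`. In
the first case `A = -A`, which is absurd; in the second the other one is `-1`, which commutes with
everything and hence is not in `N`.
-/

open Matrix

/-- Index type for `n` qubits: `Fin n → Fin 2` has cardinality `2^n`. -/
abbrev QubitIdx (n : ℕ) := Fin n → Fin 2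

/-- `2^n × 2^n` complex matrices. -/
abbrev Mat (n : ℕ) := Matrix (QubitIdx n) (QubitIdx n) ℂ

/-- The four single-qubit Pauli matrices `I, X, Y, Z`. -/
noncomputable def pauliMat : Fin 4 → Matrix (Fin 2) (Fin 2) ℂ :=
  ![1, !![0, 1; 1, 0], !![0, -Complex.I; Complex.I, 0], !![1, 0; 0, -1]]

/-- The tensor product `P₁ ⊗ ⋯ ⊗ Pₙ` of single-qubit Pauli matrices. -/
noncomputable def pauliTensor (n : ℕ) (f : Fin n → Fin 4) : Mat n :=
  fun i k => ∏ j, pauliMat (f j) (i j) (k j)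

/-- An `n`-qubit Pauli operator: `ε • P₁ ⊗ ⋯ ⊗ Pₙ` with `ε ∈ {1, -1}`. -/
def IsPauli (n : ℕ) (M : Mat n) : Prop :=
  ∃ (ε : ℂ) (f : Fin n → Fin 4), (ε = 1 ∨ ε = -1) ∧ M = ε • pauliTensor n f

/-- Two operators anticommute. -/
def PAntiCommute {n : ℕ} (A B : Mat n) : Prop := A * B = -(B * A)

/-- Finite rooted trees whose nodes are labeled by `2^n × 2^n` matrices.
A `leaf` has no children; a `node` has a (finite) list of children. -/
inductive PTree (n : ℕ) : Type
  | leaf : Mat n → PTree n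
  | node : Mat n → List (PTree n) → PTree n

namespace PTree

variable {n : ℕ}

/-- The label of the root of the tree. -/
def label : PTree n → Mat n
  | leaf M => M
  | node M _ => M

mutual
/-- The multiset of leaf labels of the tree. -/
def leaves : PTree n → Multiset (Mat n)
  | .leaf M => {M}
  | .node _ cs => leavesList cs
/-- The multiset of leaf labels of a list of trees. -/
def leavesList : List (PTree n) → Multiset (Mat n)
  | [] => 0
  | c :: cs => c.leaves + leavesList cs
end

mutual
/-- The list of leaf labels of the tree in depth-first (left-to-right) order. -/
def leafList : PTree n → List (Mat n)
  | .leaf M => [M]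
  | .node _ cs => leafListList cs
/-- The list of leaf labels of a list of trees, in depth-first order. -/
def leafListList : List (PTree n) → List (Mat n)
  | [] => []
  | c :: cs => c.leafList ++ leafListList cs
end

mutual
/-- The multiset of all node labels of the tree. -/
def nodeLabels : PTree n → Multiset (Mat n)
  | .leaf M => {M}
  | .node M cs => M ::ₘ nodeLabelsList cs
/-- The multiset of all node labels of a list of trees. -/
def nodeLabelsList : List (PTree n) → Multiset (Mat n)
  | [] => 0
  | c :: cs => c.nodeLabels + nodeLabelsList cs
end

/-- The multiset of labels of all nodes at depth ≥ 2, i.e. strictly below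
the children of the root. -/
def deepLabels : PTree n → Multiset (Mat n)
  | .leaf _ => 0
  | .node _ cs => (cs.map fun c =>
      match c with
      | .leaf _ => (0 : Multiset (Mat n))
      | .node _ cs' => nodeLabelsList cs').sum

/-- A valid determining tree over a set `S`: every leaf is labeled by an
element of `S`, every node is labeled by a Pauli operator, and for every
internal node, the labels of its children pairwise commute and the label of
the node is the matrix product of the labels of its children. -/
inductive Valid (S : Set (Mat n)) : PTree n → Prop
  | leaf {M : Mat n} : M ∈ S → Valid S (PTree.leaf M)
  | node {M : Mat n} {cs : List (PTree n)} :
      IsPauli n M →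
      M = (cs.map label).prod →
      cs.Pairwise (fun a b => Commute a.label b.label) →
      (∀ c ∈ cs, Valid S c) →
      Valid S (PTree.node M cs)

/-- Every internal node of the tree has at most two children. -/
inductive Binary : PTree n → Prop
  | leaf (M : Mat n) : Binary (PTree.leaf M)
  | node (M : Mat n) (cs : List (PTree n)) :
      cs.length ≤ 2 → (∀ c ∈ cs, Binary c) → Binary (PTree.node M cs)

open scoped Classical in
/-- The determining set of a tree: the set of operators occurring with odd
total multiplicity among its leaves. -/
noncomputable def detSet (τ : PTree n) : Set (Mat n) :=
  {M | Odd (τ.leaves.count M)}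

end PTree

/-- `τ` is a determining tree for `A` over `S`. -/
def IsDetTree {n : ℕ} (S : Set (Mat n)) (A : Mat n) (τ : PTree n) : Prop :=
  PTree.Valid S τ ∧ τ.label = A

/-- A set `S` of Pauli operators is contextual if for some Pauli operator `A`
there are determining trees for `A` and for `-A` over `S` with identical
determining sets. -/
def Contextual (n : ℕ) (S : Set (Mat n)) : Prop :=
  ∃ (A : Mat n) (τ τ' : PTree n), IsPauli n A ∧
    IsDetTree S A τ ∧ IsDetTree S (-A) τ' ∧ τ.detSet = τ'.detSet

/-! ### Pauli operators -/

/-- The tensor product of a family of single-qubit matrices. -/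
def tensor {n : ℕ} (M : Fin n → Matrix (Fin 2) (Fin 2) ℂ) : Mat n :=
  Matrix.of fun i k => ∏ j, M j (i j) (k j)

lemma pauliTensor_eq (n : ℕ) (f : Fin n → Fin 4) :
    pauliTensor n f = tensor fun j => pauliMat (f j) := rfl

lemma tensor_apply {n : ℕ} (M : Fin n → Matrix (Fin 2) (Fin 2) ℂ) (i k : QubitIdx n) :
    tensor M i k = ∏ j, M j (i j) (k j) := rfl

/-- The mixed-product property of the tensor product. -/
lemma tensor_mul {n : ℕ} (M N : Fin n → Matrix (Fin 2) (Fin 2) ℂ) :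
    tensor M * tensor N = tensor fun j => M j * N j := by
  ext i k
  simp only [Matrix.mul_apply, tensor_apply, ← Finset.prod_mul_distrib]
  rw [Finset.prod_univ_sum, Fintype.piFinset_univ]

lemma tensor_smul {n : ℕ} (c : Fin n → ℂ) (M : Fin n → Matrix (Fin 2) (Fin 2) ℂ) :
    (tensor fun j => c j • M j) = (∏ j, c j) • tensor M := by
  ext i k
  simp [tensor_apply, Finset.prod_mul_distrib]

lemma pauliMat_mul_self (a : Fin 4) : pauliMat a * pauliMat a = 1 := by
  fin_cases a <;> ext i j <;> fin_cases i <;> fin_cases j <;>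
    simp [pauliMat, Matrix.mul_apply, Fin.sum_univ_two]

lemma pauliMat_mul (a b : Fin 4) :
    ∃ (c : ℂ) (h : Fin 4), pauliMat a * pauliMat b = c • pauliMat h := by
  -- With `I, X, Y, Z` numbered `0, 1, 2, 3`, products correspond to bitwise exclusive or.
  refine ⟨!![1, 1, 1, 1; 1, 1, Complex.I, -Complex.I; 1, -Complex.I, 1, Complex.I;
    1, Complex.I, -Complex.I, 1] a b,
    !![0, 1, 2, 3; 1, 0, 3, 2; 2, 3, 0, 1; 3, 2, 1, 0] a b, ?_⟩
  fin_cases a <;> fin_cases b <;> ext i j <;> fin_cases i <;> fin_cases j <;>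
    simp [pauliMat, Matrix.mul_apply, Fin.sum_univ_two]

lemma pauliMat_comm (a b : Fin 4) :
    ∃ c : ℂ, (c = 1 ∨ c = -1) ∧ pauliMat a * pauliMat b = c • (pauliMat b * pauliMat a) := by
  refine ⟨if a = 0 ∨ b = 0 ∨ a = b then 1 else -1, by split_ifs <;> simp, ?_⟩
  fin_cases a <;> fin_cases b <;> ext i j <;> fin_cases i <;> fin_cases j <;>
    simp [pauliMat, Matrix.mul_apply, Fin.sum_univ_two]

lemma pauliTensor_mul_self (n : ℕ) (f : Fin n → Fin 4) :
    pauliTensor n f * pauliTensor n f = 1 := by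
  rw [pauliTensor_eq, tensor_mul]
  ext i k
  simp only [pauliMat_mul_self, tensor_apply, Matrix.one_apply]
  by_cases h : i = k
  · simp [h]
  · obtain ⟨j, hj⟩ := Function.ne_iff.1 h
    rw [if_neg h]
    exact Finset.prod_eq_zero (Finset.mem_univ j) (if_neg hj)

lemma pauliTensor_mul (n : ℕ) (f g : Fin n → Fin 4) :
    ∃ (c : ℂ) (h : Fin n → Fin 4), pauliTensor n f * pauliTensor n g = c • pauliTensor n h := by
  choose c h hc using fun j => pauliMat_mul (f j) (g j)
  refine ⟨∏ j, c j, h, ?_⟩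
  simp only [pauliTensor_eq, tensor_mul, hc, tensor_smul]

lemma pauliTensor_comm (n : ℕ) (f g : Fin n → Fin 4) :
    ∃ c : ℂ, (c = 1 ∨ c = -1) ∧
      pauliTensor n f * pauliTensor n g = c • (pauliTensor n g * pauliTensor n f) := by
  choose c h hc using fun j => pauliMat_comm (f j) (g j)
  refine ⟨∏ j, c j, ?_, ?_⟩
  · exact Finset.prod_induction c (fun x => x = 1 ∨ x = -1)
      (by rintro _ _ (rfl | rfl) (rfl | rfl) <;> simp) (Or.inl rfl) (fun j _ => h j)
  · rw [pauliTensor_eq, pauliTensor_eq, tensor_mul, tensor_mul, ← tensor_smul]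
    simp only [hc]

lemma IsPauli.mul_self {n : ℕ} {A : Mat n} (hA : IsPauli n A) : A * A = 1 := by
  obtain ⟨ε, f, hε, rfl⟩ := hA
  rcases hε with rfl | rfl <;> simp [pauliTensor_mul_self]

lemma IsPauli.ne_neg {n : ℕ} {A : Mat n} (hA : IsPauli n A) : A ≠ -A := by
  intro h
  have h0 : A = 0 := by
    ext i k
    exact self_eq_neg.1 (congrFun (congrFun h i) k)
  have := hA.mul_self
  rw [h0] at this
  simp at this

lemma IsPauli.commute_or {n : ℕ} {A B : Mat n} (hA : IsPauli n A) (hB : IsPauli n B) :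
    Commute A B ∨ PAntiCommute A B := by
  obtain ⟨ε, f, -, rfl⟩ := hA
  obtain ⟨δ, g, -, rfl⟩ := hB
  obtain ⟨c, hc, h⟩ := pauliTensor_comm n f g
  rcases hc with rfl | rfl
  · left
    rw [Commute, SemiconjBy]
    simp only [smul_mul_assoc, mul_smul_comm, h, one_smul]
    rw [smul_comm]
  · right
    rw [PAntiCommute]
    simp only [smul_mul_assoc, mul_smul_comm, h, neg_smul, one_smul, smul_neg]
    rw [smul_comm]

lemma IsPauli.mul {n : ℕ} {A B : Mat n} (hA : IsPauli n A) (hB : IsPauli n B)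
    (h : Commute A B) : IsPauli n (A * B) := by
  -- The product has square `1`, which leaves only the phases `1` and `-1`.
  have hsq : A * B * (A * B) = 1 := by
    rw [h.symm.mul_mul_mul_comm, hA.mul_self, hB.mul_self, one_mul]
  obtain ⟨ε, f, -, rfl⟩ := hA
  obtain ⟨δ, g, -, rfl⟩ := hB
  obtain ⟨c, k, hk⟩ := pauliTensor_mul n f g
  have he : (ε • pauliTensor n f) * (δ • pauliTensor n g) = (ε * δ * c) • pauliTensor n k := by
    rw [smul_mul_assoc, mul_smul_comm, hk, smul_smul, smul_smul, mul_assoc]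
  refine ⟨ε * δ * c, k, ?_, he⟩
  rw [he, smul_mul_assoc, mul_smul_comm, pauliTensor_mul_self, smul_smul] at hsq
  have := congrFun (congrFun hsq 0) 0
  simp only [Matrix.smul_apply, Matrix.one_apply_eq, smul_eq_mul, mul_one] at this
  exact mul_self_eq_one_iff.1 this

/-! ### Commutation and anticommutation -/

namespace PAntiCommute

variable {n : ℕ} {x a b : Mat n}

lemma symm (h : PAntiCommute a b) : PAntiCommute b a := by
  unfold PAntiCommute at *
  rw [h, neg_neg]

lemma mul_right (h : PAntiCommute x a) (h' : PAntiCommute x b) : Commute x (a * b) := by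
  unfold PAntiCommute at *
  rw [Commute, SemiconjBy, ← mul_assoc, h, neg_mul, mul_assoc, h', mul_neg, neg_neg, mul_assoc]

lemma mul_right_commute (h : PAntiCommute x a) (h' : Commute x b) :
    PAntiCommute x (a * b) := by
  unfold PAntiCommute at *
  rw [← mul_assoc, h, neg_mul, mul_assoc, h'.eq, mul_assoc]

lemma commute_mul_right (h : Commute x a) (h' : PAntiCommute x b) :
    PAntiCommute x (a * b) := by
  unfold PAntiCommute at *
  rw [← mul_assoc, h.eq, mul_assoc, h', mul_neg, mul_assoc]

end PAntiCommute

/-! ### Four operators give contextuality -/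

/-- Some determining tree for `M` over `S` has `L` as its multiset of leaves. -/
def Det {n : ℕ} (S : Set (Mat n)) (M : Mat n) (L : Multiset (Mat n)) : Prop :=
  ∃ τ : PTree n, τ.Valid S ∧ τ.label = M ∧ τ.leaves = L

lemma Det.leaf {n : ℕ} {S : Set (Mat n)} {M : Mat n} (h : M ∈ S) : Det S M {M} :=
  ⟨.leaf M, .leaf h, rfl, by simp [PTree.leaves]⟩

lemma Det.isPauli {n : ℕ} {S : Set (Mat n)} (hS : ∀ M ∈ S, IsPauli n M) {M : Mat n}
    {L : Multiset (Mat n)} (h : Det S M L) : IsPauli n M := by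
  obtain ⟨τ, hv, rfl, -⟩ := h
  cases hv with
  | leaf h => exact hS _ h
  | node h => exact h

lemma Det.mul {n : ℕ} {S : Set (Mat n)} (hS : ∀ M ∈ S, IsPauli n M) {M N : Mat n}
    {L K : Multiset (Mat n)} (hM : Det S M L) (hN : Det S N K) (h : Commute M N) :
    Det S (M * N) (L + K) := by
  have hp := (hM.isPauli hS).mul (hN.isPauli hS) h
  obtain ⟨τ, hv, rfl, rfl⟩ := hM
  obtain ⟨σ, hw, rfl, rfl⟩ := hN
  refine ⟨.node (τ.label * σ.label) [τ, σ], .node hp (by simp) (by simpa using h) ?_, rfl, ?_⟩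
  · simp [hv, hw]
  · simp [PTree.leaves, PTree.leavesList]

open scoped Classical in
lemma Det.contextual {n : ℕ} {S : Set (Mat n)} (hS : ∀ M ∈ S, IsPauli n M) {M N : Mat n}
    {L K : Multiset (Mat n)} (hM : Det S M L) (hN : Det S N K) (h : N = -M)
    (hc : ∀ x, L.count x % 2 = K.count x % 2) : Contextual n S := by
  have hp := hM.isPauli hS
  obtain ⟨τ, hv, rfl, rfl⟩ := hM
  obtain ⟨σ, hw, hl, rfl⟩ := hN
  refine ⟨τ.label, τ, σ, hp, ⟨hv, rfl⟩, ⟨hw, hl.trans h⟩, ?_⟩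
  ext x
  simp only [PTree.detSet, Set.mem_ofPred_eq, Nat.odd_iff, hc x]

/-- The configuration in which `D` commutes with `B` but not with `C`. -/
lemma contextual_of_path {n : ℕ} {S : Set (Mat n)} (hS : ∀ M ∈ S, IsPauli n M)
    {A B C D : Mat n} (hA : A ∈ S) (hB : B ∈ S) (hC : C ∈ S) (hD : D ∈ S)
    (hAB : Commute A B) (hAC : Commute A C) (hBC : PAntiCommute B C) (hDA : PAntiCommute D A)
    (hDB : Commute D B) (hDC : PAntiCommute D C) : Contextual n S := by
  have t₁ : Det S (D * B * C) ({D} + {B} + {C}) :=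
    ((Det.leaf hD).mul hS (Det.leaf hB) hDB).mul hS (Det.leaf hC)
      (hDC.symm.mul_right hBC.symm).symm
  have hACD : Commute (A * C) D := (hDA.mul_right hDC).symm
  have hA' : PAntiCommute (A * C * D) A :=
    (PAntiCommute.commute_mul_right ((Commute.refl A).mul_right hAC) hDA.symm).symm
  have hB' : PAntiCommute (A * C * D) B :=
    (PAntiCommute.mul_right_commute (.commute_mul_right hAB.symm hBC) hDB.symm).symm
  have t₂ : Det S (A * C * D * (A * B)) ({A} + {C} + {D} + ({A} + {B})) :=
    (((Det.leaf hA).mul hS (Det.leaf hC) hAC).mul hS (Det.leaf hD) hACD).mul hS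
      ((Det.leaf hA).mul hS (Det.leaf hB) hAB) (hA'.mul_right hB')
  refine t₁.contextual hS t₂ ?_ ?_
  · calc A * C * D * (A * B) = A * C * D * A * B := by noncomm_ring
      _ = -(A * (A * (C * D)) * B) := by
        rw [hA', ← mul_assoc A C D, neg_mul]
      _ = -(C * D * B) := by rw [← mul_assoc A A, (hS A hA).mul_self, one_mul]
      _ = D * B * -C := by
        rw [mul_assoc C, (hDC.symm.mul_right hBC.symm).eq, mul_neg]
      _ = -(D * B * C) := by rw [mul_neg]
  · intro x
    simp only [Multiset.count_add]
    omega

lemma contextual_of_four {n : ℕ} {S : Set (Mat n)} (hS : ∀ M ∈ S, IsPauli n M)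
    {A B C D : Mat n} (hA : A ∈ S) (hB : B ∈ S) (hC : C ∈ S) (hD : D ∈ S)
    (hAB : Commute A B) (hAC : Commute A C) (hBC : PAntiCommute B C)
    (hDA : PAntiCommute D A) : Contextual n S := by
  have hBC' : C * B = -(B * C) := hBC.symm
  have tAB := (Det.leaf hA).mul hS (Det.leaf hB) hAB
  have tAC := (Det.leaf hA).mul hS (Det.leaf hC) hAC
  rcases (hS D hD).commute_or (hS B hB) with hDB | hDB <;>
    rcases (hS D hD).commute_or (hS C hC) with hDC | hDC
  · have tDB := (Det.leaf hD).mul hS (Det.leaf hB) hDB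
    have tDC := (Det.leaf hD).mul hS (Det.leaf hC) hDC
    have h₁ : Commute (A * B) (D * C) :=
      (PAntiCommute.mul_right
        (PAntiCommute.mul_right_commute hDA hDB).symm
        (PAntiCommute.commute_mul_right hAC.symm hBC.symm).symm)
    have h₂ : Commute (A * C) (D * B) :=
      (PAntiCommute.mul_right
        (PAntiCommute.mul_right_commute hDA hDC).symm
        (PAntiCommute.commute_mul_right hAB.symm hBC).symm)
    refine (tAB.mul hS tDC h₁).contextual hS (tAC.mul hS tDB h₂) ?_ ?_
    · rw [mul_assoc, mul_assoc, ← mul_assoc C, ← mul_assoc B, ← hDC.eq, ← hDB.eq, mul_assoc D,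
        mul_assoc D, hBC', mul_neg, mul_neg]
    · intro x
      simp only [Multiset.count_add]
      omega
  · exact contextual_of_path hS hA hB hC hD hAB hAC hBC hDA hDB hDC
  · exact contextual_of_path hS hA hC hB hD hAC hAB hBC.symm hDA hDC hDB
  · have h₁ : Commute (D * (A * B)) C :=
      (PAntiCommute.mul_right hDC.symm (.commute_mul_right hAC.symm hBC.symm)).symm
    have h₂ : Commute (D * (A * C)) B :=
      (PAntiCommute.mul_right hDB.symm (.commute_mul_right hAB.symm hBC)).symm
    refine (((Det.leaf hD).mul hS tAB (hDA.mul_right hDB)).mul hS (Det.leaf hC) h₁).contextual hS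
      (((Det.leaf hD).mul hS tAC (hDA.mul_right hDC)).mul hS (Det.leaf hB) h₂) ?_ ?_
    · simp only [mul_assoc, hBC', mul_neg]
    · intro x
      simp only [Multiset.count_add]
      omega

/-! ### No four operators gives noncontextuality -/

/-- The elements of `S` that fail to commute with some element of `S`. -/
def nonCentral {n : ℕ} (S : Set (Mat n)) : Set (Mat n) :=
  {s | s ∈ S ∧ ∃ t ∈ S, ¬ Commute s t}

open scoped Classical in
/-- A chosen representative of the commutation class of `s` when `s` is in `nonCentral S`, and `1`
otherwise. It is a function of the set of elements commuting with `s`, so it agrees on equivalent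
elements whenever commutation is transitive on `nonCentral S`. -/
noncomputable def rep {n : ℕ} (S : Set (Mat n)) (s : Mat n) : Mat n :=
  if s ∈ nonCentral S then Classical.epsilon (fun u => u ∈ nonCentral S ∧ Commute s u) else 1

section Rep

variable {n : ℕ} {S : Set (Mat n)}

lemma rep_of_notMem {s : Mat n} (h : s ∉ nonCentral S) : rep S s = 1 := if_neg h

lemma rep_spec {s : Mat n} (h : s ∈ nonCentral S) :
    rep S s ∈ nonCentral S ∧ Commute s (rep S s) := by
  rw [rep, if_pos h]
  exact Classical.epsilon_spec (p := fun u => u ∈ nonCentral S ∧ Commute s u)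
    ⟨s, h, Commute.refl s⟩

variable (htr : ∀ a ∈ nonCentral S, ∀ b ∈ S, ∀ c ∈ S, Commute a b → Commute a c → Commute b c)
include htr

lemma rep_eq {s t : Mat n} (hs : s ∈ nonCentral S) (ht : t ∈ nonCentral S) (h : Commute s t) :
    rep S s = rep S t := by
  rw [rep, rep, if_pos hs, if_pos ht]
  congr 1
  ext u
  exact and_congr_right fun hu => ⟨fun h' => htr s hs t ht.1 u hu.1 h h',
    fun h' => htr t ht s hs.1 u hu.1 h.symm h'⟩

/-- Distinct nontrivial representatives do not commute. -/
lemma rep_eq_of_commute {s t : Mat n} (h : Commute (rep S s) (rep S t)) :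
    rep S s = 1 ∨ rep S t = 1 ∨ rep S s = rep S t := by
  by_cases hs : s ∈ nonCentral S
  · by_cases ht : t ∈ nonCentral S
    · obtain ⟨hs₁, hs₂⟩ := rep_spec hs
      obtain ⟨ht₁, ht₂⟩ := rep_spec ht
      have h₁ : Commute s (rep S t) := htr _ hs₁ s hs.1 _ ht₁.1 hs₂.symm h
      exact .inr (.inr (rep_eq htr hs ht (htr _ ht₁ s hs.1 t ht.1 h₁.symm ht₂.symm)))
    · exact .inr (.inl (rep_of_notMem ht))
  · exact .inl (rep_of_notMem hs)

lemma rep_mul_commute (hS : ∀ M ∈ S, IsPauli n M) {s t : Mat n} (hs : s ∈ S) (ht : t ∈ S) :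
    Commute (rep S s * s) t := by
  by_cases h : s ∈ nonCentral S
  · obtain ⟨h₁, h₂⟩ := rep_spec h
    by_cases hst : Commute s t
    · exact (htr s h _ h₁.1 t ht h₂ hst).mul_left hst
    · have hrt : ¬ Commute (rep S s) t := fun h' => hst (htr _ h₁ s hs t ht h₂.symm h')
      exact (((hS t ht).commute_or (hS _ h₁.1)).resolve_left (fun h' => hrt h'.symm)
        |>.mul_right (((hS t ht).commute_or (hS s hs)).resolve_left fun h' => hst h'.symm)).symm
  · rw [rep_of_notMem h, one_mul]
    by_contra hst
    exact h ⟨hs, t, ht, hst⟩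

omit htr in
lemma rep_mul_self (hS : ∀ M ∈ S, IsPauli n M) (s : Mat n) : rep S s * rep S s = 1 := by
  by_cases h : s ∈ nonCentral S
  · exact (hS _ (rep_spec h).1.1).mul_self
  · rw [rep_of_notMem h, one_mul]

omit htr in
lemma rep_commute (s : Mat n) : Commute (rep S s) s := by
  by_cases h : s ∈ nonCentral S
  · exact (rep_spec h).2.symm
  · rw [rep_of_notMem h]
    exact Commute.one_left s

omit htr in
lemma rep_mem_closure (s : Mat n) : rep S s ∈ Submonoid.closure S := by
  by_cases h : s ∈ nonCentral S
  · exact Submonoid.subset_closure (rep_spec h).1.1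
  · rw [rep_of_notMem h]
    exact one_mem _

end Rep

/-- The center of the multiplicative monoid generated by `S`. -/
abbrev genCenter {n : ℕ} (S : Set (Mat n)) : Submonoid (Submonoid.closure S) :=
  Submonoid.center (Submonoid.closure S)

/-- The corrected operators `rep s * s` take values in the center of the monoid generated by `S`,
where products may be taken in any order. -/
lemma exists_central_part {n : ℕ} {S : Set (Mat n)} (hS : ∀ M ∈ S, IsPauli n M)
    (htr : ∀ a ∈ nonCentral S, ∀ b ∈ S, ∀ c ∈ S, Commute a b → Commute a c → Commute b c) :
    ∃ g : Mat n → genCenter S, (∀ s, g s * g s = 1) ∧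
      ∀ s ∈ S, (((g s : genCenter S) : Submonoid.closure S) : Mat n) = rep S s * s := by
  classical
  have key : ∀ s : S, ∃ z : genCenter S,
      z * z = 1 ∧ ((z : Submonoid.closure S) : Mat n) = rep S s * s := by
    rintro ⟨s, hs⟩
    refine ⟨⟨⟨rep S s * s, mul_mem (rep_mem_closure s) (Submonoid.subset_closure hs)⟩, ?_⟩,
      ?_, rfl⟩
    · rw [Submonoid.mem_center_iff]
      rintro ⟨t, ht⟩
      apply Subtype.ext
      change t * (rep S s * s) = rep S s * s * t
      have : S ⊆ Submonoid.centralizer {rep S s * s} := fun u hu => by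
        rw [SetLike.mem_coe, Submonoid.mem_centralizer_iff]
        rintro _ rfl
        exact rep_mul_commute htr hS hs hu
      exact (Submonoid.mem_centralizer_iff.1 (Submonoid.closure_le.2 this ht) _ rfl).symm
    · apply Subtype.ext
      apply Subtype.ext
      change rep S s * s * (rep S s * s) = 1
      rw [(rep_commute s).symm.mul_mul_mul_comm, rep_mul_self hS, (hS s hs).mul_self, one_mul]
  choose z hz using key
  refine ⟨fun s => if h : s ∈ S then z ⟨s, h⟩ else 1, fun s => ?_, fun s hs => ?_⟩
  · by_cases h : s ∈ S
    · simp only [dif_pos h, (hz _).1]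
    · simp only [dif_neg h, mul_one]
  · simp only [dif_pos hs, (hz ⟨s, hs⟩).2]

lemma genCenter_commute {n : ℕ} {S : Set (Mat n)} (p : genCenter S) {x : Mat n}
    (hx : x ∈ Submonoid.closure S) : Commute (((p : Submonoid.closure S)) : Mat n) x :=
  (congrArg Subtype.val (Submonoid.mem_center_iff.1 p.2 ⟨x, hx⟩)).symm

lemma map_prod_mul_self {α M : Type*} [CommMonoid M] {g : α → M} (hg : ∀ s, g s * g s = 1)
    (L : Multiset α) : (L.map g).prod * (L.map g).prod = 1 := by
  rw [← Multiset.prod_map_mul]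
  simp [hg]

open scoped Classical in
/-- A product of involutions in a commutative monoid depends only on the parities of the
multiplicities of the factors. -/
lemma map_prod_eq_of_odd {α M : Type*} [CommMonoid M] {g : α → M} (hg : ∀ s, g s * g s = 1)
    {L K : Multiset α} (h : ∀ x, Odd (L.count x) ↔ Odd (K.count x)) :
    (L.map g).prod = (K.map g).prod := by
  have hpow : ∀ x, g x ^ L.count x = g x ^ K.count x := fun x => by
    have hx : g x ^ 2 = 1 := by rw [sq, hg]
    rw [pow_eq_pow_mod _ hx, pow_eq_pow_mod (K.count x) hx]
    have := h x
    rw [Nat.odd_iff, Nat.odd_iff] at this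
    congr 1
    omega
  have hext : ∀ J : Multiset α, J.toFinset ⊆ L.toFinset ∪ K.toFinset →
      (J.map g).prod = ∏ x ∈ L.toFinset ∪ K.toFinset, g x ^ J.count x := fun J hJ => by
    rw [Finset.prod_multiset_map_count]
    refine Finset.prod_subset hJ fun x _ hx => ?_
    rw [Multiset.count_eq_zero_of_notMem (by simpa using hx), pow_zero]
  rw [hext L Finset.subset_union_left, hext K Finset.subset_union_right]
  exact Finset.prod_congr rfl fun x _ => hpow x

section Trees

variable {n : ℕ} {S : Set (Mat n)}

/-- The label `M` has the normal form determined by the leaves `L`: a representative (or `1`) times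
the product of the central parts of the leaves. -/
def NormalForm (g : Mat n → genCenter S) (M : Mat n) (L : Multiset (Mat n)) : Prop :=
  ∃ c : Mat n, (c = 1 ∨ ∃ s, c = rep S s) ∧
    M = c * (((L.map g).prod : genCenter S) : Submonoid.closure S)

lemma NormalForm.mem_closure {g : Mat n → genCenter S} {M : Mat n} {L : Multiset (Mat n)}
    (h : NormalForm g M L) : M ∈ Submonoid.closure S := by
  obtain ⟨c, hc, rfl⟩ := h
  refine mul_mem ?_ (Subtype.property _)
  rcases hc with rfl | ⟨s, rfl⟩
  · exact one_mem _
  · exact rep_mem_closure s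

variable (hS : ∀ M ∈ S, IsPauli n M)
  (htr : ∀ a ∈ nonCentral S, ∀ b ∈ S, ∀ c ∈ S, Commute a b → Commute a c → Commute b c)
  {g : Mat n → genCenter S} (hg : ∀ s, g s * g s = 1)
include hS htr hg

lemma NormalForm.mul {M N : Mat n} {L K : Multiset (Mat n)} (hM : NormalForm g M L)
    (hN : NormalForm g N K) (h : Commute M N) : NormalForm g (M * N) (L + K) := by
  have hMc := hM.mem_closure
  have hNc := hN.mem_closure
  obtain ⟨c, hc, hMe⟩ := hM
  obtain ⟨d, hd, hNe⟩ := hN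
  have hcc : c ∈ Submonoid.closure S := by
    rcases hc with rfl | ⟨s, rfl⟩
    exacts [one_mem _, rep_mem_closure s]
  have hdc : d ∈ Submonoid.closure S := by
    rcases hd with rfl | ⟨s, rfl⟩
    exacts [one_mem _, rep_mem_closure s]
  have hp := map_prod_mul_self hg L
  have hq := map_prod_mul_self hg K
  unfold NormalForm
  rw [Multiset.map_add, Multiset.prod_add]
  generalize (L.map g).prod = p at *
  generalize (K.map g).prod = q at *
  have hp' : ((p : Submonoid.closure S) : Mat n) * ((p : Submonoid.closure S) : Mat n) = 1 :=
    congrArg (fun z : genCenter S => ((z : Submonoid.closure S) : Mat n)) hp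
  have hq' : ((q : Submonoid.closure S) : Mat n) * ((q : Submonoid.closure S) : Mat n) = 1 :=
    congrArg (fun z : genCenter S => ((z : Submonoid.closure S) : Mat n)) hq
  have hcM : c = M * ((p : Submonoid.closure S) : Mat n) := by
    rw [hMe, mul_assoc, hp', mul_one]
  have hdN : d = N * ((q : Submonoid.closure S) : Mat n) := by
    rw [hNe, mul_assoc, hq', mul_one]
  have hcd : Commute c d := by
    rw [hcM]
    refine Commute.mul_left ?_ (genCenter_commute p hdc)
    rw [hdN]
    exact h.mul_right (genCenter_commute q hMc).symm
  refine ⟨c * d, ?_, ?_⟩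
  · rcases hc with rfl | ⟨s, rfl⟩
    · rwa [one_mul]
    rcases hd with rfl | ⟨t, rfl⟩
    · rw [mul_one]
      exact .inr ⟨s, rfl⟩
    rcases rep_eq_of_commute htr hcd with h' | h' | h'
    · rw [h', one_mul]
      exact .inr ⟨t, rfl⟩
    · rw [h', mul_one]
      exact .inr ⟨s, rfl⟩
    · rw [h', rep_mul_self hS]
      exact .inl rfl
  · rw [hMe, hNe]
    exact (genCenter_commute p hdc).mul_mul_mul_comm _ _

lemma normalForm_leavesList {cs : List (PTree n)}
    (hcomm : cs.Pairwise fun a b => Commute a.label b.label)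
    (h : ∀ c ∈ cs, NormalForm g c.label c.leaves) :
    NormalForm g (cs.map PTree.label).prod (PTree.leavesList cs) := by
  induction cs with
  | nil => exact ⟨1, .inl rfl, by simp [PTree.leavesList]⟩
  | cons a cs ih =>
    rw [List.pairwise_cons] at hcomm
    simp only [List.map_cons, List.prod_cons, PTree.leavesList]
    refine NormalForm.mul hS htr hg (h a (by simp))
      (ih hcomm.2 fun c hc => h c (List.mem_cons_of_mem _ hc))
      (Commute.list_prod_right _ _ fun x hx => ?_)
    obtain ⟨c, hc, rfl⟩ := List.mem_map.1 hx
    exact hcomm.1 c hc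

/-- The label of a determining tree is in normal form with respect to its leaves. Only the
commutation of siblings is used, not that the inner labels are Pauli operators. -/
lemma normalForm_of_valid
    (hgS : ∀ s ∈ S, (((g s : genCenter S) : Submonoid.closure S) : Mat n) = rep S s * s)
    {τ : PTree n} (hτ : τ.Valid S) : NormalForm g τ.label τ.leaves := by
  induction hτ with
  | @leaf M hM =>
    refine ⟨rep S M, .inr ⟨M, rfl⟩, ?_⟩
    simp only [PTree.label, PTree.leaves, Multiset.map_singleton, Multiset.prod_singleton]
    rw [hgS M hM, ← mul_assoc, rep_mul_self hS, one_mul]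
  | @node M cs _ hprod hcomm _ ih =>
    simp only [PTree.label, PTree.leaves]
    rw [hprod]
    exact normalForm_leavesList hS htr hg hcomm ih

lemma not_contextual
    (hgS : ∀ s ∈ S, (((g s : genCenter S) : Submonoid.closure S) : Mat n) = rep S s * s) :
    ¬ Contextual n S := by
  rintro ⟨A, τ, τ', hA, ⟨hv, hl⟩, ⟨hv', hl'⟩, hdet⟩
  obtain ⟨c, hc, h⟩ := normalForm_of_valid hS htr hg hgS hv
  obtain ⟨d, hd, h'⟩ := normalForm_of_valid hS htr hg hgS hv'
  have hpar : (τ.leaves.map g).prod = (τ'.leaves.map g).prod :=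
    map_prod_eq_of_odd hg fun x => by
      have hx := Set.ext_iff.1 hdet x
      simp only [PTree.detSet, Set.mem_ofPred_eq] at hx
      convert hx
  rw [hl] at h
  rw [hl', ← hpar] at h'
  have hp := map_prod_mul_self hg τ.leaves
  generalize (τ.leaves.map g).prod = p at *
  have hp' : ((p : Submonoid.closure S) : Mat n) * ((p : Submonoid.closure S) : Mat n) = 1 :=
    congrArg (fun z : genCenter S => ((z : Submonoid.closure S) : Mat n)) hp
  have hcd : d = -c := by
    calc d = -A * ((p : Submonoid.closure S) : Mat n) := by rw [h', mul_assoc, hp', mul_one]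
      _ = -c := by rw [h, neg_mul, mul_assoc, hp', mul_one]
  have hne : c ≠ d := fun e => hA.ne_neg (by rw [h', ← e, ← h])
  have hcomm : Commute c d := by
    rw [hcd]
    exact (Commute.refl c).neg_right
  -- A representative of a noncentral class is not `-1`, since `-1` commutes with everything.
  have hrep : ∀ s, rep S s = -1 → False := fun s hs => by
    by_cases hN : s ∈ nonCentral S
    · obtain ⟨-, t, -, ht⟩ := (rep_spec hN).1
      exact ht (hs ▸ (Commute.one_left t).neg_left)
    · rw [rep_of_notMem hN] at hs
      have := congrFun (congrFun hs 0) 0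
      simp only [Matrix.one_apply_eq, Matrix.neg_apply] at this
      norm_num at this
  rcases hc with rfl | ⟨s, rfl⟩
  · rcases hd with rfl | ⟨t, rfl⟩
    · exact hne rfl
    · exact hrep t hcd
  · rcases hd with rfl | ⟨t, rfl⟩
    · exact hrep s (by rw [hcd, neg_neg])
    · rcases rep_eq_of_commute htr hcomm with h₁ | h₁ | h₁
      · exact hrep t (by rw [hcd, h₁])
      · exact hrep s (by rw [← h₁, hcd, neg_neg])
      · exact hne h₁

end Trees

/-- A finite set `S` of Pauli operators is contextual iff it
contains operators `A, B, C, D` with `A` commuting with `B` and `C`, `B`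
anticommuting with `C`, and `D` anticommuting with `A`. -/
theorem contextual_iff_exists_four {n : ℕ} (S : Finset (Mat n))
    (hS : ∀ M ∈ S, IsPauli n M) :
    Contextual n (↑S : Set (Mat n)) ↔
      ∃ A ∈ S, ∃ B ∈ S, ∃ C ∈ S, ∃ D ∈ S,
        Commute A B ∧ Commute A C ∧ PAntiCommute B C ∧ PAntiCommute D A := by
  constructor
  · intro hctx
    by_contra hno
    have htr : ∀ a ∈ nonCentral (S : Set (Mat n)), ∀ b ∈ (S : Set (Mat n)),
        ∀ c ∈ (S : Set (Mat n)), Commute a b → Commute a c → Commute b c := by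
      rintro a ⟨ha, d, hd, had⟩ b hb c hc hab hac
      by_contra hbc
      exact hno ⟨a, ha, b, hb, c, hc, d, hd, hab, hac,
        ((hS b hb).commute_or (hS c hc)).resolve_left hbc,
        ((hS d hd).commute_or (hS a ha)).resolve_left fun h => had h.symm⟩
    obtain ⟨g, hg, hgS⟩ := exists_central_part (S := (S : Set (Mat n))) hS htr
    exact not_contextual (S := (S : Set (Mat n))) hS htr hg hgS hctx
  · rintro ⟨A, hA, B, hB, C, hC, D, hD, hAB, hAC, hBC, hDA⟩
    exact contextual_of_four (S := (S : Set (Mat n))) hS hA hB hC hD hAB hAC hBC hDA
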